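/- arXiv:2101.05660 — 3 statements merged into one kernel-verified Lean document; each statement's English description precedes it below -/
import Mathlib

section
/- Let φ : ℝⁿ → (0,∞) be a radial, radially decreasing, lower semicontinuous measurable function with ∫_{ℝⁿ} φ dm = 1 that satisfies the comparison condition sup{ φ_t(x)/φ(x) : t ∈ (0,1), ‖x‖ > 1 } < ∞. Let μ be a locally finite complex (or signed) Borel measure on ℝⁿ such that (|μ| ∗ φ_{t₀})(x₁) < ∞ for some t₀ > 0 and x₁ ∈ ℝⁿ. If x₀ ∈ ℝⁿ is a σ-point of μ with D_σμ(x₀) = L ∈ ℂ, then the convolution integral φ[μ] has nontangential limit L at x₀, i.e. for every α > 0, φ[μ](x,t) → L as (x,t) → (x₀,0) with (x,t) ∈ S(x₀,α). -/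
open MeasureTheory Metric Filter
open scoped ENNReal Topology NNReal

noncomputable section

abbrev Eu (n : ℕ) := EuclideanSpace ℝ (Fin n)

/-- The dilated kernel `φ_t(x) = t^{-n} φ(x/t)`. -/
def dil (n : ℕ) (φ : Eu n → ℝ) (t : ℝ) (x : Eu n) : ℝ := (t ^ n)⁻¹ * φ (t⁻¹ • x)

/-- radial and radially decreasing -/
def RadialDecr {n : ℕ} (φ : Eu n → ℝ) : Prop := ∀ x y : Eu n, ‖x‖ ≤ ‖y‖ → φ y ≤ φ x

/-- comparison condition -/
def CompCond (n : ℕ) (φ : Eu n → ℝ) : Prop :=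
  ∃ C : ℝ, ∀ t ∈ Set.Ioo (0:ℝ) 1, ∀ x : Eu n, 1 < ‖x‖ → dil n φ t x ≤ C * φ x

/-- σ-point of the measure dμ = f dν, with D_σ μ(x₀) = L -/
def IsSigmaPt (n : ℕ) (ν : Measure (Eu n)) (f : Eu n → ℂ) (x₀ : Eu n) (L : ℂ) : Prop :=
  ∀ ε > 0, ∃ δ > 0, ∀ (x : Eu n) (r : ℝ), 0 < r → dist x x₀ < δ → r < δ →
    ‖(∫ ξ in ball x r, f ξ ∂ν) - L * ((volume (ball x r)).toReal : ℂ)‖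
      < ε * (dist x x₀ + r) ^ n

/-- convolution integral φ[μ](x,t) -/
def convInt (n : ℕ) (ν : Measure (Eu n)) (f : Eu n → ℂ) (φ : Eu n → ℝ) (x : Eu n) (t : ℝ) : ℂ :=
  ∫ ξ, (dil n φ t (x - ξ) : ℂ) * f ξ ∂ν

/-- nontangential limit L at x₀ -/
def NTlim (n : ℕ) (u : Eu n → ℝ → ℂ) (x₀ : Eu n) (L : ℂ) : Prop :=
  ∀ α > 0, Tendsto (fun p : Eu n × ℝ => u p.1 p.2)
    (𝓝[{p : Eu n × ℝ | 0 < p.2 ∧ dist p.1 x₀ < α * p.2}] (x₀, 0)) (𝓝 L)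

lemma dil_nonneg' {n : ℕ} {φ : Eu n → ℝ} (hφpos : ∀ x, 0 < φ x) {t : ℝ} (ht : 0 < t) (x : Eu n) :
    0 ≤ dil n φ t x := by
  unfold dil
  have := hφpos (t⁻¹ • x)
  positivity

lemma dil_anti {n : ℕ} {φ : Eu n → ℝ} (hφrad : RadialDecr φ) {t : ℝ} (ht : 0 < t) {x y : Eu n}
    (h : ‖x‖ ≤ ‖y‖) : dil n φ t y ≤ dil n φ t x := by
  unfold dil
  refine mul_le_mul_of_nonneg_left (hφrad _ _ ?_) (by positivity)
  rw [norm_smul, norm_smul]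
  gcongr

lemma dil_meas {n : ℕ} {φ : Eu n → ℝ} (hφmeas : Measurable φ) (t : ℝ) (x : Eu n) :
    Measurable (fun ξ => dil n φ t (x - ξ)) := by
  unfold dil
  refine Measurable.const_mul (hφmeas.comp ?_) _
  fun_prop

lemma dil_dil {n : ℕ} (φ : Eu n → ℝ) {s t : ℝ} (hs : 0 < s) (ht : 0 < t) (x : Eu n) :
    dil n φ t x = (s ^ n)⁻¹ * dil n φ (t / s) (s⁻¹ • x) := by
  unfold dil
  rw [smul_smul, ← mul_assoc]
  congr 2
  · rw [div_pow]; field_simp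
  · congr 1; field_simp

lemma layer {n : ℕ} (κ : Measure (Eu n)) (f : Eu n → ℂ) (hf : Measurable f)
    (hf1 : ∀ ξ, ‖f ξ‖ = 1) (D : Eu n → ℝ) (hD : Measurable D) (hD0 : ∀ ξ, 0 ≤ D ξ) (M : ℝ)
    (hM : ∀ ξ, D ξ ≤ M) (s : Set (Eu n)) (hs : MeasurableSet s) (hsf : κ s < ⊤) :
    Integrable (fun l : ℝ => ∫ ξ in s ∩ {ξ | l < D ξ}, f ξ ∂κ) (volume.restrict (Set.Ioc 0 M)) ∧
    ∫ ξ in s, (D ξ : ℂ) * f ξ ∂κ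
      = ∫ l in Set.Ioc 0 M, ∫ ξ in s ∩ {ξ | l < D ξ}, f ξ ∂κ := by
  have : IsFiniteMeasure (κ.restrict s) := ⟨by simpa using hsf⟩
  set F : Eu n → ℝ → ℂ := fun ξ l => Set.indicator {p : Eu n × ℝ | p.2 < D p.1} (fun p => f p.1) (ξ, l)
    with hF
  have hmeas : MeasurableSet {p : Eu n × ℝ | p.2 < D p.1} :=
    measurableSet_lt measurable_snd (hD.comp measurable_fst)
  have hFm : Measurable (Function.uncurry F) :=
    (hf.comp measurable_fst).indicator hmeas
  have hFi : Integrable (Function.uncurry F) ((κ.restrict s).prod (volume.restrict (Set.Ioc 0 M))) := by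
    refine Integrable.of_bound hFm.aestronglyMeasurable 1 (Eventually.of_forall fun p => ?_)
    refine (norm_indicator_le_norm_self (fun p : Eu n × ℝ => f p.1) p).trans ?_
    simp [hf1]
  have e1 : ∀ l, ∫ ξ, F ξ l ∂(κ.restrict s) = ∫ ξ in s ∩ {ξ | l < D ξ}, f ξ ∂κ := by
    intro l
    have hl : MeasurableSet {ξ | l < D ξ} := measurableSet_lt measurable_const hD
    rw [Set.inter_comm, ← Measure.restrict_restrict hl, ← integral_indicator hl]
    rfl
  have e2 : ∀ ξ, ∫ l in Set.Ioc 0 M, F ξ l = (D ξ : ℂ) * f ξ := by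
    intro ξ
    have : (fun l => F ξ l) = Set.indicator (Set.Iio (D ξ)) (fun _ => f ξ) := by
      ext l; simp [hF, Set.indicator]
    rw [this, integral_indicator measurableSet_Iio, setIntegral_const,
      Measure.real, Measure.restrict_apply measurableSet_Iio]
    have h3 : Set.Iio (D ξ) ∩ Set.Ioc 0 M = Set.Ioo 0 (D ξ) := by
      ext l; have := hM ξ
      simp only [Set.mem_inter_iff, Set.mem_Iio, Set.mem_Ioc, Set.mem_Ioo]
      constructor
      · rintro ⟨a, b, c⟩; exact ⟨b, a⟩
      · rintro ⟨a, b⟩; exact ⟨b, a, by linarith⟩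
    rw [h3, Real.volume_Ioo, sub_zero, ENNReal.toReal_ofReal (hD0 ξ)]
    simp
  constructor
  · have := hFi.swap.integral_prod_left
    refine this.congr (Eventually.of_forall fun l => ?_)
    exact e1 l
  · have := integral_integral_swap hFi
    simp only [e1, e2] at this
    exact this

lemma ball_struct {n : ℕ} (hn : 0 < n) (x : Eu n) (ρ : ℝ) (hρ : 0 < ρ) (A : Set (Eu n))
    (hA : IsOpen A) (hsub : A ⊆ ball x ρ)
    (hrad : ∀ y ∈ A, ∀ z, dist z x ≤ dist y x → z ∈ A) :
    A = ∅ ∨ ∃ r, 0 < r ∧ r ≤ ρ ∧ A = ball x r := by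
  have : Nonempty (Fin n) := ⟨⟨0, hn⟩⟩
  rcases A.eq_empty_or_nonempty with h | ⟨y, hy⟩
  · exact Or.inl h
  right
  obtain ⟨w, hw⟩ := (NormedSpace.sphere_nonempty (x := x) (r := ρ)).2 hρ.le
  have hwA : w ∈ Aᶜ := fun h => by
    have := hsub h
    simp only [mem_ball, mem_sphere] at this hw
    linarith
  obtain ⟨v, hv, hvd⟩ := hA.isClosed_compl.exists_infDist_eq_dist ⟨w, hwA⟩ x
  have hEq : A = ball x (infDist x Aᶜ) := by
    ext z
    rw [mem_ball]
    constructor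
    · intro hz
      by_contra hc
      push Not at hc
      rw [hvd, dist_comm] at hc
      exact hv (hrad z hz v hc)
    · intro hz
      by_contra hc
      have := infDist_le_dist_of_mem (x := x) (show z ∈ Aᶜ from hc)
      rw [dist_comm] at this
      linarith
  refine ⟨infDist x Aᶜ, ?_, ?_, hEq⟩
  · rw [hEq] at hy
    exact pos_of_mem_ball hy
  · have := infDist_le_dist_of_mem (x := x) hwA
    rw [dist_comm] at this
    rw [mem_sphere] at hw
    linarith

lemma decay {n : ℕ} (hn : 0 < n) (φ : Eu n → ℝ)
    (hφpos : ∀ x, 0 < φ x) (hφrad : RadialDecr φ) (hφi : Integrable φ)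
    (e : Eu n) (he : 0 < ‖e‖) :
    Tendsto (fun t => dil n φ t e) (𝓝[>] 0) (𝓝 0) := by
  have : Nonempty (Fin n) := ⟨⟨0, hn⟩⟩
  set ρ := ‖e‖
  set ω := (volume (ball (0 : Eu n) 1)).toReal
  have hω : 0 < ω := ENNReal.toReal_pos (measure_ball_pos _ _ one_pos).ne' measure_ball_lt_top.ne
  have hI : Tendsto (fun t : ℝ => ∫ x, Set.indicator {x : Eu n | ρ / (2 * t) ≤ ‖x‖} φ x)
      (𝓝[>] 0) (𝓝 (∫ x : Eu n, (0 : ℝ))) := by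
    refine tendsto_integral_filter_of_dominated_convergence φ ?_ ?_ hφi ?_
    · exact Eventually.of_forall fun t => hφi.aestronglyMeasurable.indicator
        (measurableSet_le measurable_const measurable_norm)
    · refine Eventually.of_forall fun t => Eventually.of_forall fun x => ?_
      refine (norm_indicator_le_norm_self _ _).trans ?_
      rw [Real.norm_of_nonneg (hφpos x).le]
    · refine Eventually.of_forall fun x => ?_
      refine tendsto_const_nhds.congr' ?_
      have h1 : ∀ᶠ t in 𝓝[>] (0 : ℝ), t < ρ / (2 * (‖x‖ + 1)) :=
        mem_nhdsWithin_of_mem_nhds (Iio_mem_nhds (by positivity))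
      filter_upwards [h1, self_mem_nhdsWithin] with t h1 h2
      have h2' : 0 < t := h2
      rw [Set.indicator_of_notMem]
      simp only [Set.mem_ofPred_eq, not_le]
      rw [lt_div_iff₀ (by positivity)] at h1 ⊢
      nlinarith [norm_nonneg x]
  simp only [integral_zero] at hI
  have hI2 := hI.mul_const ((ω * (ρ / 4) ^ n)⁻¹)
  rw [zero_mul] at hI2
  refine squeeze_zero' ?_ ?_ hI2
  · filter_upwards [self_mem_nhdsWithin] with t ht
    exact dil_nonneg' hφpos ht _
  · filter_upwards [self_mem_nhdsWithin] with t ht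
    have ht' : 0 < t := ht
    rw [← div_eq_mul_inv, le_div_iff₀ (by positivity)]
    set c : Eu n := (3 / 4 * t⁻¹) • e
    set r := ρ / (4 * t)
    have hr : 0 < r := by positivity
    have hc : ‖c‖ = 3 * r := by
      simp only [c, r]
      rw [norm_smul, Real.norm_of_nonneg (by positivity)]
      field_simp
      simp [ρ]
    have hte : ‖t⁻¹ • e‖ = 4 * r := by
      rw [norm_smul, Real.norm_of_nonneg (by positivity)]
      simp only [r]
      field_simp
      simp [ρ]
    have hin : ∀ y ∈ ball c r, 2 * r ≤ ‖y‖ ∧ ‖y‖ ≤ 4 * r := by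
      intro y hy
      rw [mem_ball, dist_eq_norm] at hy
      have a1 := norm_sub_norm_le y c
      have a2 := norm_sub_norm_le c y
      rw [norm_sub_rev] at a2
      constructor <;> linarith
    have hvol : (volume (ball c r)).toReal = r ^ n * ω := by
      rw [Measure.addHaar_ball volume c hr.le, ENNReal.toReal_mul,
        ENNReal.toReal_ofReal (by positivity)]
      simp [ω]
    have h1 : φ (t⁻¹ • e) * (r ^ n * ω) ≤ ∫ x in ball c r, φ x := by
      rw [← hvol]
      refine setIntegral_ge_of_const_le_real measurableSet_ball measure_ball_lt_top.ne ?_ hφi.integrableOn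
      intro y hy
      exact hφrad _ _ (by rw [hte]; exact (hin y hy).2)
    have hSm : MeasurableSet {x : Eu n | ρ / (2 * t) ≤ ‖x‖} :=
      measurableSet_le measurable_const measurable_norm
    have h2 : ∫ x in ball c r, φ x ≤ ∫ x, Set.indicator {x : Eu n | ρ / (2 * t) ≤ ‖x‖} φ x := by
      rw [integral_indicator hSm]
      refine setIntegral_mono_set hφi.integrableOn (Eventually.of_forall fun x => (hφpos x).le) ?_
      refine HasSubset.Subset.eventuallyLE ?_
      intro y hy
      have := (hin y hy).1
      simp only [Set.mem_ofPred_eq]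
      refine le_trans (le_of_eq ?_) this
      simp only [r]; field_simp; norm_num
    refine le_trans (le_of_eq ?_) (h1.trans h2)
    unfold dil
    have : r ^ n = (t ^ n)⁻¹ * (ρ / 4) ^ n := by
      rw [← inv_pow, ← mul_pow]; congr 1; simp only [r]; field_simp
    rw [this]; ring

lemma far {n : ℕ} (hn : 0 < n) (φ : Eu n → ℝ)
    (hφpos : ∀ x, 0 < φ x) (hφmeas : Measurable φ)
    (hφrad : RadialDecr φ) (hφi : Integrable φ)
    (hcomp : CompCond n φ)
    (κ : Measure (Eu n)) [IsLocallyFiniteMeasure κ]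
    (t₀ : ℝ) (ht₀ : 0 < t₀) (x₁ : Eu n)
    (hfin : ∫⁻ ξ, ENNReal.ofReal (dil n φ t₀ (x₁ - ξ)) ∂κ < ⊤)
    (x₀ : Eu n) (S : Set (Eu n × ℝ)) (hS : ∀ p ∈ S, 0 < p.2) (ρ : ℝ) (hρ : 0 < ρ) :
    Tendsto (fun p : Eu n × ℝ =>
      ∫⁻ ξ in (ball p.1 ρ)ᶜ, ENNReal.ofReal (dil n φ p.2 (p.1 - ξ)) ∂κ) (𝓝[S] (x₀, 0)) (𝓝 0) := by
  have : Nonempty (Fin n) := ⟨⟨0, hn⟩⟩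
  obtain ⟨C, hC⟩ := hcomp
  obtain ⟨e, he⟩ := (NormedSpace.sphere_nonempty (x := (0 : Eu n)) (r := ρ)).2 hρ.le
  rw [mem_sphere_zero_iff_norm] at he
  have ht2 : Tendsto (fun p : Eu n × ℝ => p.2) (𝓝[S] (x₀, 0)) (𝓝[>] 0) := by
    refine tendsto_nhdsWithin_iff.2 ⟨?_, ?_⟩
    · exact (continuous_snd.tendsto (x₀, (0 : ℝ))).mono_left nhdsWithin_le_nhds
    · filter_upwards [self_mem_nhdsWithin] with p hp using hS p hp
  have ht1 : Tendsto (fun p : Eu n × ℝ => p.1) (𝓝[S] (x₀, 0)) (𝓝 x₀) :=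
    (continuous_fst.tendsto (x₀, (0 : ℝ))).mono_left nhdsWithin_le_nhds
  have hdec := (decay hn φ hφpos hφrad hφi e (he ▸ hρ)).comp ht2
  set R := max t₀ (2 * (dist x₀ x₁ + 1))
  set K := ENNReal.ofReal (2 ^ n * C)
  have hdom0 : ∀ p ∈ S, ∀ ξ, ξ ∈ (ball p.1 ρ)ᶜ → dil n φ p.2 (p.1 - ξ) ≤ dil n φ p.2 e := by
    intro p hp ξ hξ
    refine dil_anti hφrad (hS p hp) ?_
    rw [he]
    simp only [Set.mem_compl_iff, mem_ball, not_lt] at hξ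
    rwa [dist_comm, dist_eq_norm] at hξ
  have hbig : Tendsto (fun p : Eu n × ℝ => ∫⁻ ξ, (ball p.1 ρ)ᶜ.indicator
      (fun ξ => ENNReal.ofReal (dil n φ p.2 (p.1 - ξ))) ξ ∂κ) (𝓝[S] (x₀, 0))
      (𝓝 (∫⁻ ξ, 0 ∂κ)) := by
    refine tendsto_lintegral_filter_of_dominated_convergence
      (fun ξ => K * ENNReal.ofReal (dil n φ t₀ (x₁ - ξ)) + (closedBall x₁ R).indicator (fun _ => 1) ξ)
      ?_ ?_ ?_ ?_
    · exact Eventually.of_forall fun p =>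
        ((dil_meas hφmeas p.2 p.1).ennreal_ofReal).indicator measurableSet_ball.compl
    · have h1 : ∀ᶠ p : Eu n × ℝ in 𝓝[S] (x₀, 0), dil n φ p.2 e < 1 :=
        hdec.eventually (gt_mem_nhds one_pos)
      have h2 : ∀ᶠ p : Eu n × ℝ in 𝓝[S] (x₀, 0), dist p.1 x₀ < 1 :=
        ht1.eventually (ball_mem_nhds x₀ one_pos)
      have h3 : ∀ᶠ p : Eu n × ℝ in 𝓝[S] (x₀, 0), p.2 < t₀ / 2 :=
        ht2.eventually (mem_nhdsWithin_of_mem_nhds (Iio_mem_nhds (by positivity)))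
      filter_upwards [h1, h2, h3, self_mem_nhdsWithin] with p h1 h2 h3 hp
      refine Eventually.of_forall fun ξ => ?_
      by_cases hξ : ξ ∈ (ball p.1 ρ)ᶜ
      swap
      · rw [Set.indicator_of_notMem hξ]; exact zero_le
      rw [Set.indicator_of_mem hξ]
      by_cases hR : ξ ∈ closedBall x₁ R
      · rw [Set.indicator_of_mem hR]
        refine le_trans ?_ le_add_self
        rw [ENNReal.ofReal_le_one]
        linarith [hdom0 p hp ξ hξ]
      · rw [Set.indicator_of_notMem hR, add_zero, mul_comm,
          ← ENNReal.ofReal_mul (dil_nonneg' hφpos ht₀ _)]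
        refine ENNReal.ofReal_le_ofReal ?_
        simp only [mem_closedBall, not_le] at hR
        have hR1 : t₀ < dist ξ x₁ := lt_of_le_of_lt (le_max_left _ _) hR
        have hR2 : 2 * (dist x₀ x₁ + 1) < dist ξ x₁ := lt_of_le_of_lt (le_max_right _ _) hR
        have hp2 := hS p hp
        have hd : ‖(2 : ℝ)⁻¹ • (x₁ - ξ)‖ ≤ ‖p.1 - ξ‖ := by
          rw [norm_smul, ← dist_eq_norm, ← dist_eq_norm]
          have a1 := dist_triangle ξ p.1 x₁
          have a2 := dist_triangle p.1 x₀ x₁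
          rw [dist_comm x₁ ξ, dist_comm p.1 ξ, Real.norm_of_nonneg (by norm_num)]
          linarith
        refine (dil_anti hφrad hp2 hd).trans ?_
        have e1 : dil n φ p.2 ((2 : ℝ)⁻¹ • (x₁ - ξ)) = 2 ^ n * dil n φ (2 * p.2) (x₁ - ξ) := by
          rw [dil_dil φ (s := 2) (t := 2 * p.2) (by norm_num) (by positivity)]
          rw [← mul_assoc, mul_inv_cancel₀ (by positivity), one_mul]
          congr 1; field_simp
        rw [e1, dil_dil φ (s := t₀) (t := 2 * p.2) ht₀ (by positivity)]
        have h4 := hC (2 * p.2 / t₀) ⟨by positivity, by rw [div_lt_one ht₀]; linarith⟩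
          (t₀⁻¹ • (x₁ - ξ)) (by
            rw [norm_smul, ← dist_eq_norm, Real.norm_of_nonneg (by positivity), dist_comm,
              inv_mul_eq_div, one_lt_div ht₀]
            exact hR1)
        calc 2 ^ n * ((t₀ ^ n)⁻¹ * dil n φ (2 * p.2 / t₀) (t₀⁻¹ • (x₁ - ξ)))
            ≤ 2 ^ n * ((t₀ ^ n)⁻¹ * (C * φ (t₀⁻¹ • (x₁ - ξ)))) := by gcongr
          _ = _ := by unfold dil; ring
    · rw [lintegral_add_left ((dil_meas hφmeas t₀ x₁).ennreal_ofReal.const_mul _),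
        lintegral_const_mul _ (dil_meas hφmeas t₀ x₁).ennreal_ofReal,
        lintegral_indicator measurableSet_closedBall, setLIntegral_one]
      exact ENNReal.add_ne_top.2 ⟨ENNReal.mul_ne_top ENNReal.ofReal_ne_top hfin.ne,
        (isCompact_closedBall x₁ R).measure_lt_top.ne⟩
    · refine Eventually.of_forall fun ξ => ?_
      have hd' : Tendsto (fun p : Eu n × ℝ => ENNReal.ofReal (dil n φ p.2 e)) (𝓝[S] (x₀, 0)) (𝓝 0) := by
        have := ENNReal.tendsto_ofReal hdec
        simpa using this
      refine tendsto_of_tendsto_of_tendsto_of_le_of_le' tendsto_const_nhds hd'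
        (Eventually.of_forall fun p => zero_le) ?_
      filter_upwards [self_mem_nhdsWithin] with p hp
      by_cases hξ : ξ ∈ (ball p.1 ρ)ᶜ
      · rw [Set.indicator_of_mem hξ]
        exact ENNReal.ofReal_le_ofReal (hdom0 p hp ξ hξ)
      · rw [Set.indicator_of_notMem hξ]; exact zero_le
  simp only [lintegral_zero] at hbig
  refine hbig.congr fun p => ?_
  rw [lintegral_indicator measurableSet_ball.compl]

lemma dil_integral {n : ℕ} (φ : Eu n → ℝ) (hφi : Integrable φ) (hφint : ∫ x, φ x = 1)
    {t : ℝ} (ht : 0 < t) (x : Eu n) :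
    Integrable (fun ξ => dil n φ t (x - ξ)) ∧ ∫ ξ, dil n φ t (x - ξ) = 1 := by
  constructor
  · unfold dil
    have h1 : Integrable (fun y : Eu n => φ (t⁻¹ • y)) := hφi.comp_smul (inv_ne_zero ht.ne')
    exact (h1.comp_sub_left x).const_mul _
  · rw [integral_sub_left_eq_self (fun y => dil n φ t y) volume x]
    unfold dil
    rw [integral_const_mul, Measure.integral_comp_smul, hφint]
    simp only [finrank_euclideanSpace, Fintype.card_fin, smul_eq_mul, mul_one]
    rw [abs_of_pos (by positivity), inv_pow, inv_inv]
    field_simp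

/-- The near part of the estimate. -/
lemma near {n : ℕ} (hn : 0 < n) (φ : Eu n → ℝ)
    (hφpos : ∀ x, 0 < φ x) (hφmeas : Measurable φ)
    (hφrad : RadialDecr φ) (hφlsc : LowerSemicontinuous φ)
    (hφi : Integrable φ) (hφint : ∫ x, φ x = 1)
    (ν : Measure (Eu n)) [IsLocallyFiniteMeasure ν]
    (f : Eu n → ℂ) (hf : Measurable f) (hf1 : ∀ ξ, ‖f ξ‖ = 1)
    (x₀ x : Eu n) (L : ℂ) (ε ρ α t : ℝ) (hε : 0 < ε) (hρ : 0 < ρ) (hα : 0 < α) (ht : 0 < t)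
    (hx : dist x x₀ < α * t)
    (hσ : ∀ r, 0 < r → r ≤ ρ →
      ‖(∫ ξ in ball x r, f ξ ∂ν) - L * ((volume (ball x r)).toReal : ℂ)‖
      < ε * (dist x x₀ + r) ^ n) :
    ‖(∫ ξ in ball x ρ, (dil n φ t (x - ξ) : ℂ) * f ξ ∂ν)
      - L * ∫ ξ in ball x ρ, (dil n φ t (x - ξ) : ℂ)‖
      ≤ ε * 2 ^ (n - 1) * (α ^ n * φ 0 + ((volume (ball (0 : Eu n) 1)).toReal)⁻¹) := by
  set ω := (volume (ball (0 : Eu n) 1)).toReal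
  have hω : 0 < ω := ENNReal.toReal_pos (measure_ball_pos _ _ one_pos).ne' measure_ball_lt_top.ne
  set D : Eu n → ℝ := fun ξ => dil n φ t (x - ξ)
  have hDm : Measurable D := dil_meas hφmeas t x
  have hD0 : ∀ ξ, 0 ≤ D ξ := fun ξ => dil_nonneg' hφpos ht _
  set M := dil n φ t 0
  have hM0 : 0 ≤ M := dil_nonneg' hφpos ht _
  have hM : ∀ ξ, D ξ ≤ M := fun ξ => dil_anti hφrad ht (by simp)
  obtain ⟨i1, e1⟩ := layer ν f hf hf1 D hDm hD0 M hM (ball x ρ) measurableSet_ball measure_ball_lt_top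
  obtain ⟨i2, e2⟩ := layer volume (fun _ => (1 : ℂ)) measurable_const (by simp) D hDm hD0 M hM
    (ball x ρ) measurableSet_ball measure_ball_lt_top
  simp only [mul_one] at e2
  have hA : ∀ l, ∫ ξ in ball x ρ ∩ {ξ | l < D ξ}, (1 : ℂ)
      = ((volume (ball x ρ ∩ {ξ | l < D ξ})).toReal : ℂ) := by
    intro l; simp [Measure.real]
  simp only [hA] at i2 e2
  have i3 : Integrable (fun l : ℝ => (volume (ball x ρ ∩ {ξ | l < D ξ})).toReal)
      (volume.restrict (Set.Ioc 0 M)) := by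
    simpa using i2.re
  have e3 : ∫ l in Set.Ioc 0 M, (volume (ball x ρ ∩ {ξ | l < D ξ})).toReal = ∫ ξ in ball x ρ, D ξ := by
    have : ((∫ ξ in ball x ρ, D ξ : ℝ) : ℂ)
      = ((∫ l in Set.Ioc 0 M, (volume (ball x ρ ∩ {ξ | l < D ξ})).toReal : ℝ) : ℂ) := by
      rw [← integral_complex_ofReal, ← integral_complex_ofReal]; exact e2
    exact (Complex.ofReal_injective this).symm
  have hDi := dil_integral φ hφi hφint ht x
  have e4 : ∫ ξ in ball x ρ, D ξ ≤ 1 := by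
    rw [← hDi.2]
    exact setIntegral_le_integral hDi.1 (Eventually.of_forall hD0)
  have key : ∀ l, ‖(∫ ξ in ball x ρ ∩ {ξ | l < D ξ}, f ξ ∂ν)
      - L * ((volume (ball x ρ ∩ {ξ | l < D ξ})).toReal : ℂ)‖
      ≤ ε * 2 ^ (n - 1) * ((α * t) ^ n + ω⁻¹ * (volume (ball x ρ ∩ {ξ | l < D ξ})).toReal) := by
    intro l
    have hopen : IsOpen (ball x ρ ∩ {ξ | l < D ξ}) := by
      refine isOpen_ball.inter ?_
      have h1 : IsOpen (φ ⁻¹' Set.Ioi (l * t ^ n)) := hφlsc.isOpen_preimage _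
      have h2 : {ξ | l < D ξ} = (fun ξ => t⁻¹ • (x - ξ)) ⁻¹' (φ ⁻¹' Set.Ioi (l * t ^ n)) := by
        ext ξ
        simp only [D, dil, Set.mem_ofPred_eq, Set.mem_preimage, Set.mem_Ioi]
        rw [inv_mul_eq_div, lt_div_iff₀ (by positivity)]
      rw [h2]
      exact h1.preimage (by fun_prop)
    rcases ball_struct hn x ρ hρ _ hopen Set.inter_subset_left (by
      rintro y ⟨hy1, hy2⟩ z hz
      refine ⟨lt_of_le_of_lt hz hy1, lt_of_lt_of_le (show l < D y from hy2) ?_⟩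
      refine dil_anti hφrad ht ?_
      rwa [dist_comm, dist_comm y, dist_eq_norm, dist_eq_norm] at hz) with h | ⟨r, hr, hrρ, h⟩
    · rw [h]; simp only [Measure.restrict_empty, integral_zero_measure, measure_empty]
      simp
      positivity
    · rw [h]
      refine (hσ r hr hrρ).le.trans ?_
      have : Nonempty (Fin n) := ⟨⟨0, hn⟩⟩
      have hvol : (volume (ball x r)).toReal = r ^ n * ω := by
        rw [Measure.addHaar_ball volume x hr.le, ENNReal.toReal_mul,
          ENNReal.toReal_ofReal (by positivity)]
        simp [ω]
      rw [hvol, mul_comm (r ^ n), inv_mul_cancel_left₀ hω.ne', mul_assoc]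
      refine mul_le_mul_of_nonneg_left ?_ hε.le
      calc (dist x x₀ + r) ^ n ≤ (α * t + r) ^ n := by gcongr
        _ ≤ _ := add_pow_le (by positivity) hr.le n
  rw [e1, e2, ← integral_const_mul, ← integral_sub i1 (i2.const_mul L)]
  refine (norm_integral_le_of_norm_le (((integrable_const _).add (i3.const_mul _)).const_mul _)
    (Eventually.of_forall key)).trans ?_
  rw [integral_const_mul]
  refine mul_le_mul_of_nonneg_left ?_ (by positivity)
  rw [integral_add' (integrable_const _) (i3.const_mul _), integral_const_mul, e3, setIntegral_const]
  refine add_le_add (le_of_eq ?_) ?_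
  · simp only [Measure.real, Real.volume_Ioc, sub_zero, ENNReal.toReal_ofReal hM0, smul_eq_mul]
    simp only [M, dil, smul_zero]
    rw [mul_pow]; field_simp
  · calc ω⁻¹ * ∫ ξ in ball x ρ, D ξ ≤ ω⁻¹ * 1 := by gcongr
      _ = ω⁻¹ := mul_one _

theorem stmt0 {n : ℕ} (hn : 0 < n) (φ : Eu n → ℝ)
    (hφpos : ∀ x, 0 < φ x) (hφmeas : Measurable φ)
    (hφrad : RadialDecr φ) (hφlsc : LowerSemicontinuous φ)
    (hφint : ∫ x, φ x = 1)
    (hcomp : CompCond n φ)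
    (ν : Measure (Eu n)) [IsLocallyFiniteMeasure ν]
    (f : Eu n → ℂ) (hf : Measurable f) (hf1 : ∀ ξ, ‖f ξ‖ = 1)
    (t₀ : ℝ) (ht₀ : 0 < t₀) (x₁ : Eu n)
    (hfin : ∫⁻ ξ, ENNReal.ofReal (dil n φ t₀ (x₁ - ξ)) ∂ν < ⊤)
    (x₀ : Eu n) (L : ℂ) (hσ : IsSigmaPt n ν f x₀ L) :
    NTlim n (fun x t => convInt n ν f φ x t) x₀ L := by
  have hφi : Integrable φ := by
    by_contra h
    rw [integral_undef h] at hφint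
    exact zero_ne_one hφint
  intro α hα
  set S := {p : Eu n × ℝ | 0 < p.2 ∧ dist p.1 x₀ < α * p.2} with hSdef
  have hS : ∀ p ∈ S, 0 < p.2 := fun p hp => hp.1
  have ht1 : Tendsto (fun p : Eu n × ℝ => p.1) (𝓝[S] (x₀, 0)) (𝓝 x₀) :=
    (continuous_fst.tendsto (x₀, (0 : ℝ))).mono_left nhdsWithin_le_nhds
  have hvfin : ∫⁻ ξ, ENNReal.ofReal (dil n φ t₀ (x₁ - ξ)) < ⊤ :=
    (dil_integral φ hφi hφint ht₀ x₁).1.lintegral_lt_top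
  rw [Metric.tendsto_nhds]
  intro η hη
  set Q := 2 ^ (n - 1) * (α ^ n * φ 0 + ((volume (ball (0 : Eu n) 1)).toReal)⁻¹)
  have hQ : 0 ≤ Q := by
    have := hφpos 0
    positivity
  have hε : 0 < η / (3 * (Q + 1)) := by positivity
  obtain ⟨δ, hδ, hσδ⟩ := hσ _ hε
  have hρ : 0 < δ / 2 := by positivity
  have f1 := far hn φ hφpos hφmeas hφrad hφi hcomp ν t₀ ht₀ x₁ hfin x₀ S hS (δ / 2) hρ
  have f2 := far hn φ hφpos hφmeas hφrad hφi hcomp volume t₀ ht₀ x₁ hvfin x₀ S hS (δ / 2) hρ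
  have g1 := f1.eventually (gt_mem_nhds (show 0 < ENNReal.ofReal (η / 3) by simpa using hη))
  have g2 := f2.eventually (gt_mem_nhds (show 0 < ENNReal.ofReal (η / (3 * (‖L‖ + 1))) by
    rw [ENNReal.ofReal_pos]; positivity))
  have g3 : ∀ᶠ p : Eu n × ℝ in 𝓝[S] (x₀, 0), dist p.1 x₀ < δ :=
    ht1.eventually (ball_mem_nhds x₀ hδ)
  filter_upwards [g1, g2, g3, self_mem_nhdsWithin] with p g1 g2 g3 hp
  obtain ⟨x, t⟩ := p
  obtain ⟨ht, hx⟩ := hp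
  simp only at g1 g2 g3 ht hx ⊢
  have hnear := near hn φ hφpos hφmeas hφrad hφlsc hφi hφint ν f hf hf1 x₀ x L _ (δ / 2) α t hε hρ
    hα ht hx (fun r hr hr' => hσδ x r hr g3 (by linarith))
  set G : Eu n → ℂ := fun ξ => (dil n φ t (x - ξ) : ℂ) * f ξ with hG
  have hDm := dil_meas hφmeas t x
  have hGm : Measurable G := (Complex.measurable_ofReal.comp hDm).mul hf
  have hGn : ∀ ξ, ‖G ξ‖ = dil n φ t (x - ξ) := by
    intro ξ
    simp only [hG, norm_mul, hf1, mul_one, Complex.norm_real]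
    exact Real.norm_of_nonneg (dil_nonneg' hφpos ht _)
  have hGb : IntegrableOn G (ball x (δ / 2)) ν := by
    have : IsFiniteMeasure (ν.restrict (ball x (δ / 2))) := ⟨by simpa using measure_ball_lt_top⟩
    refine Integrable.of_bound hGm.aestronglyMeasurable (dil n φ t 0) (Eventually.of_forall fun ξ => ?_)
    rw [hGn]
    exact dil_anti hφrad ht (by simp)
  have hGe : ∀ ξ, ‖G ξ‖ₑ = ENNReal.ofReal (dil n φ t (x - ξ)) := by
    intro ξ; rw [← hGn, ofReal_norm]
  have hGc : IntegrableOn G (ball x (δ / 2))ᶜ ν := by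
    refine ⟨hGm.aestronglyMeasurable, ?_⟩
    unfold HasFiniteIntegral
    simp only [hGe]
    exact g1.trans ENNReal.ofReal_lt_top
  have hGi : Integrable G ν := by
    rw [← integrableOn_univ, ← Set.union_compl_self (ball x (δ / 2))]
    exact hGb.union hGc
  have hDi := dil_integral φ hφi hφint ht x
  have hDc : Integrable (fun ξ => (dil n φ t (x - ξ) : ℂ)) := hDi.1.ofReal
  have s1 := integral_add_compl (measurableSet_ball (x := x) (ε := δ / 2)) hGi
  have s2 := integral_add_compl (measurableSet_ball (x := x) (ε := δ / 2)) hDc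
  have s3 : ∫ ξ, (dil n φ t (x - ξ) : ℂ) = 1 := by
    rw [integral_complex_ofReal, hDi.2]; simp
  rw [s3] at s2
  have b1 : ‖∫ ξ in (ball x (δ / 2))ᶜ, G ξ ∂ν‖ < η / 3 := by
    have := (enorm_integral_le_lintegral_enorm (μ := ν.restrict (ball x (δ / 2))ᶜ) G)
    simp only [hGe] at this
    have := this.trans_lt g1
    rw [← ofReal_norm] at this
    exact (ENNReal.ofReal_lt_ofReal_iff (by positivity)).1 this
  have b2 : ‖∫ ξ in (ball x (δ / 2))ᶜ, (dil n φ t (x - ξ) : ℂ)‖ < η / (3 * (‖L‖ + 1)) := by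
    have := (enorm_integral_le_lintegral_enorm (μ := volume.restrict (ball x (δ / 2))ᶜ)
      (fun ξ => (dil n φ t (x - ξ) : ℂ)))
    have hh : ∀ ξ, ‖(dil n φ t (x - ξ) : ℂ)‖ₑ = ENNReal.ofReal (dil n φ t (x - ξ)) := by
      intro ξ
      rw [← ofReal_norm, Complex.norm_real, Real.norm_of_nonneg (dil_nonneg' hφpos ht _)]
    simp only [hh] at this
    have := this.trans_lt g2
    rw [← ofReal_norm] at this
    exact (ENNReal.ofReal_lt_ofReal_iff (by positivity)).1 this
  rw [dist_eq_norm]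
  have hconv : convInt n ν f φ x t = ∫ ξ, G ξ ∂ν := rfl
  rw [hconv]
  set a := ∫ ξ in ball x (δ / 2), G ξ ∂ν
  set b := ∫ ξ in (ball x (δ / 2))ᶜ, G ξ ∂ν
  set c := ∫ ξ in ball x (δ / 2), (dil n φ t (x - ξ) : ℂ)
  set d := ∫ ξ in (ball x (δ / 2))ᶜ, (dil n φ t (x - ξ) : ℂ)
  have hsplit : (∫ ξ, G ξ ∂ν) - L = (a - L * c) + b - L * d := by
    rw [← s1]
    linear_combination L * s2
  rw [hsplit]
  have n1 : ‖a - L * c‖ ≤ η / 3 := by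
    refine hnear.trans ?_
    rw [mul_assoc]
    change η / (3 * (Q + 1)) * Q ≤ η / 3
    rw [div_mul_eq_mul_div, div_le_div_iff₀ (by positivity) (by positivity)]
    nlinarith
  have n2 : ‖L * d‖ ≤ η / 3 := by
    rw [norm_mul]
    calc ‖L‖ * ‖d‖ ≤ ‖L‖ * (η / (3 * (‖L‖ + 1))) := by gcongr
      _ ≤ η / 3 := by
        rw [mul_div_assoc', div_le_div_iff₀ (by positivity) (by positivity)]
        nlinarith [norm_nonneg L]
  calc ‖(a - L * c) + b - L * d‖ ≤ ‖a - L * c‖ + ‖b‖ + ‖L * d‖ :=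
        (norm_sub_le _ _).trans (by gcongr; exact norm_add_le _ _)
    _ < η := by linarith

end
end

section
/- Let φ : ℝⁿ → [0,∞) be a radial, radially decreasing, lower semicontinuous function with ∫_{ℝⁿ} φ dm = 1. Let μ be a locally finite complex (or signed) Borel measure on ℝⁿ such that |μ|(B(0,r)) = O(rⁿ) as r → ∞ and such that (μ ∗ φ_{t₀})(x₁) exists (is finite) for some x₁ ∈ ℝⁿ and t₀ ∈ (0,∞). If x₀ ∈ ℝⁿ is a σ-point of μ with D_σμ(x₀) = L ∈ ℂ, then φ[μ] has nontangential limit L at x₀. -/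
open MeasureTheory Metric Filter
open scoped ENNReal Topology NNReal

noncomputable section

lemma aux_pow (n : ℕ) {a b R : ℝ} (ha : 0 ≤ a) (hb : 0 ≤ b) (hR : 0 ≤ R) :
    (a + b * R) ^ n ≤ (2 * (a + b)) ^ n * (1 + R ^ n) := by
  rcases le_total R 1 with h | h
  · calc (a + b * R) ^ n ≤ (2 * (a + b)) ^ n := by
          apply pow_le_pow_left₀ (by positivity); nlinarith
      _ ≤ _ := le_mul_of_one_le_right (by positivity) (by have : 0 ≤ R ^ n := by positivity
                                                          linarith)
  · calc (a + b * R) ^ n ≤ (2 * (a + b) * R) ^ n := by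
          apply pow_le_pow_left₀ (by positivity); nlinarith [mul_nonneg hb hR, mul_nonneg ha hR]
      _ = (2 * (a + b)) ^ n * R ^ n := mul_pow _ _ _
      _ ≤ _ := by gcongr; linarith

lemma aux_radius {n : ℕ} (hn : 0 < n) (φ : Eu n → ℝ) (hφpos : ∀ x, 0 ≤ φ x)
    (hφrad : RadialDecr φ) (hφlsc : LowerSemicontinuous φ) (hint : Integrable φ) (s : ℝ)
    (hs : s ∈ Set.Ioo 0 (φ 0)) : ∃ r > 0, ∀ y, s < φ y ↔ ‖y‖ < r := by
  haveI : Nonempty (Fin n) := ⟨⟨0, hn⟩⟩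
  have hopen : IsOpen {y | s < φ y} := hφlsc.isOpen_preimage s
  have hfin : volume {y | s < φ y} < ∞ := hint.measure_gt_lt_top hs.1
  have hne : ({y | s < φ y}ᶜ).Nonempty := by
    rw [Set.nonempty_compl]
    intro h
    rw [h] at hfin
    simp at hfin
  obtain ⟨z, hz, hzd⟩ := hopen.isClosed_compl.exists_infDist_eq_dist hne 0
  refine ⟨‖z‖, ?_, ?_⟩
  · rw [gt_iff_lt, norm_pos_iff]
    rintro rfl
    exact hz hs.2
  · intro y
    constructor
    · intro hy
      by_contra! h
      exact hz (lt_of_lt_of_le hy (hφrad _ _ h))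
    · intro hy
      by_contra h
      have := infDist_le_dist_of_mem (x := (0 : Eu n)) (s := {y | s < φ y}ᶜ) (y := y) h
      rw [hzd, dist_zero_left, dist_zero_left] at this
      linarith

lemma aux_growth {n : ℕ} (ν : Measure (Eu n)) [IsLocallyFiniteMeasure ν]
    (hgrowth : (fun r : ℝ => (ν (ball (0 : Eu n) r)).toReal) =O[atTop] (fun r : ℝ => r ^ n)) :
    ∃ C ≥ 0, ∃ r₀ ≥ 0, ∀ (x : Eu n) (r : ℝ), 0 ≤ r →
      ν.real (ball x r) ≤ C * (‖x‖ + r + r₀) ^ n := by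
  obtain ⟨C, hC, h⟩ := hgrowth.exists_nonneg
  rw [Asymptotics.isBigOWith_iff] at h
  obtain ⟨r₀, h⟩ := eventually_atTop.1 h
  refine ⟨C, hC, max r₀ 0, le_max_right _ _, fun x r hr => ?_⟩
  have h1 := h (‖x‖ + r + max r₀ 0) (by have := le_max_left r₀ 0; have := norm_nonneg x; linarith)
  have hp : 0 ≤ ‖x‖ + r + max r₀ 0 := by have := le_max_right r₀ 0; have := norm_nonneg x; linarith
  rw [Real.norm_of_nonneg ENNReal.toReal_nonneg, Real.norm_of_nonneg (pow_nonneg hp _)] at h1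
  refine le_trans ?_ h1
  refine measureReal_mono ?_ measure_ball_lt_top.ne
  refine ball_subset_ball' ?_
  rw [dist_zero_right]
  have := le_max_right r₀ 0
  linarith

lemma aux_R {n : ℕ} (hn : 0 < n) (φ : Eu n → ℝ) (hφpos : ∀ x, 0 ≤ φ x)
    (hφrad : RadialDecr φ) (hφlsc : LowerSemicontinuous φ) (hφint : ∫ x, φ x = 1) :
    ∃ R : ℝ → ℝ, (∀ s ∈ Set.Ioo 0 (φ 0), 0 < R s ∧ ∀ y, s < φ y ↔ ‖y‖ < R s) ∧
      IntegrableOn (fun s => 1 + R s ^ n) (Set.Ioo 0 (φ 0)) ∧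
      ∫ s in Set.Ioo 0 (φ 0), R s ^ n * volume.real (ball (0 : Eu n) 1) = 1 := by
  have hint : Integrable φ := by
    by_contra h
    rw [integral_undef h] at hφint
    norm_num at hφint
  have h := aux_radius hn φ hφpos hφrad hφlsc hint
  choose! R hR0 hR using h
  haveI : Nonempty (Fin n) := ⟨⟨0, hn⟩⟩
  have hω : 0 < volume.real (ball (0 : Eu n) 1) :=
    ENNReal.toReal_pos (measure_ball_pos _ _ one_pos).ne' measure_ball_lt_top.ne
  have hV : ∀ s ∈ Set.Ioo 0 (φ 0),
      volume.real {y | s < φ y} = R s ^ n * volume.real (ball (0 : Eu n) 1) := by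
    intro s hs
    have : {y | s < φ y} = ball (0 : Eu n) (R s) := by
      ext y; simp [hR s hs]
    rw [this, Measure.real, Measure.addHaar_ball _ _ (hR0 s hs).le, ENNReal.toReal_mul,
      ENNReal.toReal_ofReal (pow_nonneg (hR0 s hs).le _)]
    simp [Measure.real]
  have hlc := hint.integral_eq_integral_meas_lt (Eventually.of_forall hφpos)
  rw [hφint] at hlc
  have hVint : IntegrableOn (fun s => volume.real {y | s < φ y}) (Set.Ioi 0) := by
    by_contra h
    rw [integral_undef h] at hlc
    norm_num at hlc
  have hVint' := hVint.mono_set (Set.Ioo_subset_Ioi_self : Set.Ioo 0 (φ 0) ⊆ Set.Ioi 0)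
  have hV2 : IntegrableOn (fun s => R s ^ n * volume.real (ball (0 : Eu n) 1)) (Set.Ioo 0 (φ 0)) :=
    hVint'.congr_fun hV measurableSet_Ioo
  refine ⟨R, fun s hs => ⟨hR0 s hs, hR s hs⟩, ?_, ?_⟩
  · refine Integrable.add ?_ ?_
    · exact integrableOn_const (by simp)
    · have := hV2.mul_const (volume.real (ball (0 : Eu n) 1))⁻¹
      refine this.congr (Eventually.of_forall fun s => ?_)
      simp only
      field_simp
  · rw [← setIntegral_congr_fun measurableSet_Ioo hV, hlc]
    refine setIntegral_eq_of_subset_of_forall_diff_eq_zero measurableSet_Ioi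
      Set.Ioo_subset_Ioi_self ?_ |>.symm
    intro s hs
    have hs0 : φ 0 ≤ s := by
      by_contra! h
      exact hs.2 ⟨hs.1, h⟩
    have : {y | s < φ y} = ∅ := by
      ext y
      simp only [Set.mem_setOf_eq, Set.mem_empty_iff_false, iff_false, not_lt]
      exact (hφrad 0 y (by simp)).trans hs0
    simp [this]

lemma aux_fubini {n : ℕ} (φ : Eu n → ℝ) (hφpos : ∀ x, 0 ≤ φ x)
    (hφrad : RadialDecr φ) (hφlsc : LowerSemicontinuous φ)
    (ν : Measure (Eu n)) [IsLocallyFiniteMeasure ν]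
    (f : Eu n → ℂ) (hf : Measurable f) (hf1 : ∀ ξ, ‖f ξ‖ = 1)
    (C r₀ : ℝ) (hC : 0 ≤ C) (hr₀ : 0 ≤ r₀)
    (hg : ∀ (x : Eu n) (r : ℝ), 0 ≤ r → ν.real (ball x r) ≤ C * (‖x‖ + r + r₀) ^ n)
    (R : ℝ → ℝ) (hR : ∀ s ∈ Set.Ioo 0 (φ 0), 0 < R s ∧ ∀ y, s < φ y ↔ ‖y‖ < R s)
    (hRi : IntegrableOn (fun s => 1 + R s ^ n) (Set.Ioo 0 (φ 0)))
    (x : Eu n) (t : ℝ) (ht : 0 < t) :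
    Integrable (fun s => (((t ^ n)⁻¹ : ℝ) : ℂ) * ∫ ξ in ball x (t * R s), f ξ ∂ν)
      (volume.restrict (Set.Ioo 0 (φ 0))) ∧
    convInt n ν f φ x t =
      ∫ s in Set.Ioo 0 (φ 0), (((t ^ n)⁻¹ : ℝ) : ℂ) * ∫ ξ in ball x (t * R s), f ξ ∂ν := by
  set S : Set (ℝ × Eu n) := {p | p.1 < φ (t⁻¹ • (x - p.2))} with hS
  have hφm : Measurable φ := hφlsc.measurable
  have hSm : MeasurableSet S := by
    apply measurableSet_lt measurable_fst
    apply hφm.comp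
    fun_prop
  set F : ℝ × Eu n → ℂ := S.indicator (fun p => f p.2) with hF
  have hFm : Measurable F := (hf.comp measurable_snd).indicator hSm
  have hsec : ∀ s ∈ Set.Ioo 0 (φ 0), ∀ ξ, (s, ξ) ∈ S ↔ ξ ∈ ball x (t * R s) := by
    intro s hs ξ
    rw [hS, Set.mem_setOf_eq, (hR s hs).2, norm_smul, norm_inv, Real.norm_of_nonneg ht.le,
      mem_ball', dist_eq_norm, inv_mul_lt_iff₀ ht]
  have hFsec : ∀ s ∈ Set.Ioo 0 (φ 0), (fun ξ => F (s, ξ)) = (ball x (t * R s)).indicator f := by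
    intro s hs
    ext ξ
    by_cases h : (s, ξ) ∈ S
    · rw [hF, Set.indicator_of_mem h, Set.indicator_of_mem ((hsec s hs ξ).1 h)]
    · rw [hF, Set.indicator_of_notMem h,
        Set.indicator_of_notMem (fun h' => h ((hsec s hs ξ).2 h'))]
  have hFint : Integrable F ((volume.restrict (Set.Ioo 0 (φ 0))).prod ν) := by
    rw [integrable_prod_iff hFm.aestronglyMeasurable]
    constructor
    · filter_upwards [ae_restrict_mem measurableSet_Ioo] with s hs
      rw [hFsec s hs, integrable_indicator_iff measurableSet_ball]
      refine Measure.integrableOn_of_bounded (M := 1) measure_ball_lt_top.ne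
        hf.aestronglyMeasurable (Eventually.of_forall fun ξ => (hf1 ξ).le)
    · refine Integrable.mono' (hRi.const_mul (C * (2 * (‖x‖ + r₀ + t)) ^ n)) ?_ ?_
      · exact (hFm.norm.stronglyMeasurable.integral_prod_right).aestronglyMeasurable
      · filter_upwards [ae_restrict_mem measurableSet_Ioo] with s hs
        have e : (fun ξ => ‖F (s, ξ)‖) = (ball x (t * R s)).indicator (fun _ => (1 : ℝ)) := by
          ext ξ
          rw [congrFun (hFsec s hs) ξ, norm_indicator_eq_indicator_norm]
          simp only [hf1]
        have hp := (hR s hs).1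
        rw [e, integral_indicator measurableSet_ball, setIntegral_const, smul_eq_mul, mul_one,
          Real.norm_of_nonneg measureReal_nonneg]
        refine (hg x _ (by positivity)).trans ?_
        rw [mul_assoc]
        refine mul_le_mul_of_nonneg_left ?_ hC
        refine le_trans (le_of_eq ?_) (aux_pow n (by positivity : 0 ≤ ‖x‖ + r₀) ht.le hp.le)
        ring
  have hsi : ∀ s ∈ Set.Ioo 0 (φ 0), ∫ ξ, F (s, ξ) ∂ν = ∫ ξ in ball x (t * R s), f ξ ∂ν := by
    intro s hs
    rw [hFsec s hs, integral_indicator measurableSet_ball]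
  constructor
  · apply Integrable.const_mul
    refine hFint.integral_prod_left.congr ?_
    filter_upwards [ae_restrict_mem measurableSet_Ioo] with s hs using hsi s hs
  · rw [integral_const_mul, ← setIntegral_congr_fun measurableSet_Ioo hsi, ← integral_prod _ hFint,
      integral_prod_symm _ hFint, convInt, ← integral_const_mul]
    congr 1
    ext ξ
    have e : (fun s => F (s, ξ)) = (Set.Iio (φ (t⁻¹ • (x - ξ)))).indicator (fun _ => f ξ) := by
      ext s
      rfl
    have hle : φ (t⁻¹ • (x - ξ)) ≤ φ 0 := hφrad _ _ (by simp)
    have e2 : Set.Ioo 0 (φ 0) ∩ Set.Iio (φ (t⁻¹ • (x - ξ))) = Set.Ioo 0 (φ (t⁻¹ • (x - ξ))) := by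
      ext s
      simp only [Set.mem_inter_iff, Set.mem_Ioo, Set.mem_Iio]
      constructor
      · rintro ⟨⟨h1, h2⟩, h3⟩; exact ⟨h1, h3⟩
      · rintro ⟨h1, h3⟩; exact ⟨⟨h1, h3.trans_le hle⟩, h3⟩
    rw [e, setIntegral_indicator measurableSet_Iio, e2, setIntegral_const, dil]
    simp [hφpos]
    ring

theorem stmt1 {n : ℕ} (hn : 0 < n) (φ : Eu n → ℝ)
    (hφpos : ∀ x, 0 ≤ φ x)
    (hφrad : RadialDecr φ) (hφlsc : LowerSemicontinuous φ)
    (hφint : ∫ x, φ x = 1)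
    (ν : Measure (Eu n)) [IsLocallyFiniteMeasure ν]
    (f : Eu n → ℂ) (hf : Measurable f) (hf1 : ∀ ξ, ‖f ξ‖ = 1)
    (hgrowth : (fun r : ℝ => (ν (ball (0 : Eu n) r)).toReal) =O[atTop] (fun r : ℝ => r ^ n))
    (t₀ : ℝ) (ht₀ : 0 < t₀) (x₁ : Eu n)
    (hfin : Integrable (fun ξ => (dil n φ t₀ (x₁ - ξ) : ℂ) * f ξ) ν)
    (x₀ : Eu n) (L : ℂ) (hσ : IsSigmaPt n ν f x₀ L) :
    NTlim n (fun x t => convInt n ν f φ x t) x₀ L := by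

  obtain ⟨R, hR, hRi, hR1⟩ := aux_R hn φ hφpos hφrad hφlsc hφint
  obtain ⟨C, hC, r₀, hr₀, hg⟩ := aux_growth ν hgrowth
  have hfub := aux_fubini φ hφpos hφrad hφlsc ν f hf hf1 C r₀ hC hr₀ hg R hR hRi
  haveI : Nonempty (Fin n) := ⟨⟨0, hn⟩⟩
  intro α hα
  set A : Set (Eu n × ℝ) := {p | 0 < p.2 ∧ dist p.1 x₀ < α * p.2} with hA
  set ω := volume.real (ball (0 : Eu n) 1) with hω
  have hmem : ∀ᶠ p in 𝓝[A] (x₀, (0 : ℝ)), p ∈ A := self_mem_nhdsWithin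
  have hdist : ∀ δ > 0, ∀ᶠ p : Eu n × ℝ in 𝓝[A] (x₀, (0 : ℝ)), dist p.1 x₀ < δ := by
    intro δ hδ
    have h1 : Tendsto (fun p : Eu n × ℝ => dist p.1 x₀) (𝓝 (x₀, (0 : ℝ))) (𝓝 0) := by
      have : Continuous (fun p : Eu n × ℝ => dist p.1 x₀) := by fun_prop
      simpa using this.tendsto (x₀, (0 : ℝ))
    exact (h1.mono_left nhdsWithin_le_nhds).eventually (gt_mem_nhds hδ)
  have htim : ∀ (c : ℝ), ∀ δ > 0, ∀ᶠ p : Eu n × ℝ in 𝓝[A] (x₀, (0 : ℝ)), p.2 * c < δ := by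
    intro c δ hδ
    have h1 : Tendsto (fun p : Eu n × ℝ => p.2 * c) (𝓝 (x₀, (0 : ℝ))) (𝓝 0) := by
      have : Continuous (fun p : Eu n × ℝ => p.2 * c) := by fun_prop
      simpa using this.tendsto (x₀, (0 : ℝ))
    exact (h1.mono_left nhdsWithin_le_nhds).eventually (gt_mem_nhds hδ)
  -- the key estimate at small scales
  have key : ∀ ε > 0, ∃ δ > 0, ∀ p ∈ A, dist p.1 x₀ < δ → ∀ r, 0 < r → p.2 * r < δ →
      ‖(((p.2 ^ n)⁻¹ : ℝ) : ℂ) * (∫ ξ in ball p.1 (p.2 * r), f ξ ∂ν) - L * ((r ^ n * ω : ℝ) : ℂ)‖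
        ≤ ε * (α + 1 * r) ^ n := by
    intro ε hε
    obtain ⟨δ, hδ, h⟩ := hσ ε hε
    refine ⟨δ, hδ, fun p hp hd r hr hrδ => ?_⟩
    obtain ⟨ht, hpd⟩ := hp
    have h1 := h p.1 (p.2 * r) (by positivity) hd hrδ
    have hv : (volume (ball p.1 (p.2 * r))).toReal = p.2 ^ n * (r ^ n * ω) := by
      rw [Measure.addHaar_ball _ _ (by positivity), ENNReal.toReal_mul,
        ENNReal.toReal_ofReal (by positivity), hω, Measure.real]
      simp [mul_pow, mul_assoc]
    rw [hv] at h1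
    have htn : ((p.2 : ℂ) ^ n) ≠ 0 := pow_ne_zero _ (by exact_mod_cast ht.ne')
    have e : (((p.2 ^ n)⁻¹ : ℝ) : ℂ) * (∫ ξ in ball p.1 (p.2 * r), f ξ ∂ν)
        - L * ((r ^ n * ω : ℝ) : ℂ) = (((p.2 ^ n)⁻¹ : ℝ) : ℂ) *
        ((∫ ξ in ball p.1 (p.2 * r), f ξ ∂ν) - L * ((p.2 ^ n * (r ^ n * ω) : ℝ) : ℂ)) := by
      push_cast
      field_simp
    rw [e, norm_mul, Complex.norm_real, Real.norm_of_nonneg (by positivity),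
      inv_mul_le_iff₀ (by positivity)]
    refine h1.le.trans ?_
    have : (dist p.1 x₀ + p.2 * r) ^ n ≤ (p.2 * (α + 1 * r)) ^ n := by
      apply pow_le_pow_left₀ (by positivity)
      nlinarith
    rw [mul_pow] at this
    nlinarith
  have hlim : Tendsto (fun p : Eu n × ℝ => ∫ s in Set.Ioo 0 (φ 0),
      (((p.2 ^ n)⁻¹ : ℝ) : ℂ) * ∫ ξ in ball p.1 (p.2 * R s), f ξ ∂ν) (𝓝[A] (x₀, (0 : ℝ)))
      (𝓝 (∫ s in Set.Ioo 0 (φ 0), L * ((R s ^ n * ω : ℝ) : ℂ))) := by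
    obtain ⟨δ, hδ, hk⟩ := key 1 one_pos
    set b : ℝ := ((‖x₀‖ + δ + r₀) / δ + 1) with hb
    have hb0 : 0 ≤ b := by positivity
    refine tendsto_integral_filter_of_dominated_convergence
      (fun s => ((2 * (α + 1)) ^ n + ‖L‖ * ω + C * (2 * (0 + b)) ^ n) * (1 + R s ^ n))
      ?_ ?_ (hRi.const_mul _) ?_
    · filter_upwards [hmem] with p hp using (hfub p.1 p.2 hp.1).1.aestronglyMeasurable
    · filter_upwards [hmem, hdist δ hδ] with p hp hd
      filter_upwards [ae_restrict_mem measurableSet_Ioo] with s hs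
      have hr := (hR s hs).1
      have hrn : 0 ≤ R s ^ n := by positivity
      have ht := hp.1
      have hω0 : 0 ≤ ω := measureReal_nonneg
      have t2 : 0 ≤ (2 * (α + 1)) ^ n * (1 + R s ^ n) := by positivity
      have t3 : 0 ≤ C * (2 * (0 + b)) ^ n * (1 + R s ^ n) := by positivity
      have t4 : 0 ≤ ‖L‖ * ω := by positivity
      have t5 : 0 ≤ ‖L‖ * ω * R s ^ n := by positivity
      by_cases hsm : p.2 * R s < δ
      · have h1 := hk p hp hd (R s) hr hsm
        have h2 := aux_pow n hα.le zero_le_one hr.le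
        have h3 := norm_le_norm_sub_add ((((p.2 ^ n)⁻¹ : ℝ) : ℂ) *
          (∫ ξ in ball p.1 (p.2 * R s), f ξ ∂ν)) (L * ((R s ^ n * ω : ℝ) : ℂ))
        have h4 : ‖L * ((R s ^ n * ω : ℝ) : ℂ)‖ = ‖L‖ * ω * R s ^ n := by
          rw [norm_mul, Complex.norm_real, Real.norm_of_nonneg (by positivity)]
          ring
        nlinarith
      · push Not at hsm
        have h1 : ‖∫ ξ in ball p.1 (p.2 * R s), f ξ ∂ν‖ ≤ 1 * ν.real (ball p.1 (p.2 * R s)) :=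
          norm_setIntegral_le_of_norm_le_const measure_ball_lt_top (fun ξ _ => (hf1 ξ).le)
        have h2 := hg p.1 (p.2 * R s) (by positivity)
        have h3 : ‖p.1‖ ≤ ‖x₀‖ + δ := by
          have := norm_le_norm_add_norm_sub x₀ p.1
          rw [← dist_eq_norm, dist_comm] at this
          linarith
        have h4 : ‖p.1‖ + p.2 * R s + r₀ ≤ p.2 * (0 + b * R s) := by
          have : ‖x₀‖ + δ + r₀ ≤ (‖x₀‖ + δ + r₀) / δ * (p.2 * R s) := by
            rw [div_mul_eq_mul_div, le_div_iff₀ hδ]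
            gcongr
          rw [hb]
          nlinarith
        have h5 : (‖p.1‖ + p.2 * R s + r₀) ^ n ≤ p.2 ^ n * (0 + b * R s) ^ n := by
          rw [← mul_pow]
          exact pow_le_pow_left₀ (by positivity) h4 _
        have h6 := aux_pow n le_rfl hb0 hr.le
        have h7 : ‖(((p.2 ^ n)⁻¹ : ℝ) : ℂ) * ∫ ξ in ball p.1 (p.2 * R s), f ξ ∂ν‖
            ≤ C * (0 + b * R s) ^ n := by
          rw [norm_mul, Complex.norm_real, Real.norm_of_nonneg (by positivity),
            inv_mul_le_iff₀ (by positivity)]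
          have := mul_le_mul_of_nonneg_left h5 hC
          linarith
        have h8 := mul_le_mul_of_nonneg_left h6 hC
        nlinarith
    · filter_upwards [ae_restrict_mem measurableSet_Ioo] with s hs
      have hr := (hR s hs).1
      rw [Metric.tendsto_nhds]
      intro ε hε
      have hc : 0 < (α + 1 * R s) ^ n := by positivity
      obtain ⟨η, hη, hk'⟩ := key (ε / 2 / (α + 1 * R s) ^ n) (by positivity)
      filter_upwards [hmem, hdist η hη, htim (R s) η hη] with p hp hd ht
      have := hk' p hp hd (R s) hr ht
      rw [div_mul_cancel₀ _ hc.ne'] at this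
      rw [dist_eq_norm]
      linarith
  have hL : ∫ s in Set.Ioo 0 (φ 0), L * ((R s ^ n * ω : ℝ) : ℂ) = L := by
    rw [integral_const_mul, integral_complex_ofReal, hR1]
    simp
  rw [hL] at hlim
  refine hlim.congr' ?_
  filter_upwards [hmem] with p hp using (hfub p.1 p.2 hp.1).2.symm

end
end

section
/- Let μ be a locally finite complex (or signed) Borel measure on ℝⁿ such that the Gauss–Weierstrass integral W|μ|(x₁,t₀) = ∫_{ℝⁿ} W(x₁−y, t₀) d|μ|(y) is finite for some x₁ ∈ ℝⁿ and t₀ > 0. If x₀ ∈ ℝⁿ is a σ-point of μ with D_σμ(x₀) = L ∈ ℂ, then the Gauss–Weierstrass integral Wμ(x,t) = ∫_{ℝⁿ} W(x−y,t) dμ(y) has nontangential limit L at x₀, i.e. for every α > 0, Wμ(x,t) → L as (x,t) → (x₀,0) with ‖x−x₀‖ < αt. -/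
open MeasureTheory Metric Filter Real
open scoped ENNReal Topology NNReal

noncomputable section

/-- The Gauss–Weierstrass (heat) kernel `W(x,t) = (4πt)^{-n/2} e^{-‖x‖²/(4t)}`. -/
def heatKer (n : ℕ) (x : Eu n) (t : ℝ) : ℝ :=
  (4 * π * t) ^ (-(n : ℝ) / 2) * Real.exp (-‖x‖ ^ 2 / (4 * t))

/-- The Gauss–Weierstrass integral Wμ(x,t) of the measure dμ = f dν. -/
def heatInt (n : ℕ) (ν : Measure (Eu n)) (f : Eu n → ℂ) (x : Eu n) (t : ℝ) : ℂ :=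
  ∫ ξ, (heatKer n (x - ξ) t : ℂ) * f ξ ∂ν

/-- Radial profile used in the layer-cake formula. -/
def kk (n : ℕ) (s : ℝ) : ℝ := (4 * π) ^ (-(n : ℝ) / 2) * (s / 2 * Real.exp (-s ^ 2 / 4))

lemma kk_nonneg (n : ℕ) {s : ℝ} (hs : 0 ≤ s) : 0 ≤ kk n s := by
  unfold kk; positivity

lemma kk_cont (n : ℕ) : Continuous (kk n) := by
  unfold kk; fun_prop

lemma exp_tail {a : ℝ} (ha : 0 ≤ a) :
    IntegrableOn (fun s : ℝ => s / 2 * Real.exp (-s ^ 2 / 4)) (Set.Ioi a) ∧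
    ∫ s in Set.Ioi a, s / 2 * Real.exp (-s ^ 2 / 4) = Real.exp (-a ^ 2 / 4) := by
  have hd : ∀ x ∈ Set.Ici a, HasDerivAt (fun s : ℝ => - Real.exp (-s ^ 2 / 4))
      (x / 2 * Real.exp (-x ^ 2 / 4)) x := by
    intro x _
    have h1 : HasDerivAt (fun s : ℝ => -s ^ 2 / 4) (-(2 * x) / 4) x := by
      simpa using ((hasDerivAt_pow 2 x).neg.div_const 4)
    have h2 : HasDerivAt (fun s : ℝ => - Real.exp (-s ^ 2 / 4))
      (-(Real.exp (-x ^ 2 / 4) * (-(2 * x) / 4))) x := h1.exp.neg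
    exact h2.congr_deriv (by ring)
  have hp : ∀ x ∈ Set.Ioi a, 0 ≤ x / 2 * Real.exp (-x ^ 2 / 4) := by
    intro x hx
    have : 0 ≤ x := ha.trans (le_of_lt hx)
    positivity
  have hl : Tendsto (fun s : ℝ => - Real.exp (-s ^ 2 / 4)) atTop (𝓝 0) := by
    have : Tendsto (fun s : ℝ => -s ^ 2 / 4) atTop atBot := by
      have h2 : Tendsto (fun s : ℝ => s ^ 2) atTop atTop := tendsto_pow_atTop two_ne_zero
      exact (tendsto_neg_atTop_atBot.comp h2).atBot_div_const (by norm_num)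
    simpa using (Real.tendsto_exp_atBot.comp this).neg
  refine ⟨integrableOn_Ioi_deriv_of_nonneg' hd hp hl, ?_⟩
  rw [integral_Ioi_of_hasDerivAt_of_nonneg' hd hp hl]; ring

lemma heatKer_eq (n : ℕ) (y : Eu n) {t : ℝ} (ht : 0 < t) :
    IntegrableOn (kk n) (Set.Ioi (‖y‖ / √t)) ∧
    heatKer n y t = ((√t) ^ n)⁻¹ * ∫ s in Set.Ioi (‖y‖ / √t), kk n s := by
  obtain ⟨h1, h2⟩ := exp_tail (a := ‖y‖ / √t) (by positivity)
  refine ⟨h1.const_mul _, ?_⟩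
  unfold kk heatKer
  rw [integral_const_mul, h2, Real.mul_rpow (by positivity) ht.le, div_pow, Real.sq_sqrt ht.le]
  have : t ^ (-(n:ℝ)/2) = ((√t) ^ n)⁻¹ := by
    rw [Real.sqrt_eq_rpow, ← Real.rpow_natCast, ← Real.rpow_mul ht.le, ← Real.rpow_neg ht.le]
    congr 1; ring
  rw [this]
  have e : -‖y‖ ^ 2 / (4 * t) = -(‖y‖ ^ 2 / t) / 4 := by field_simp
  rw [e]; ring

lemma heatKer_nonneg (n : ℕ) (y : Eu n) {t : ℝ} (ht : 0 < t) : 0 ≤ heatKer n y t := by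
  unfold heatKer; positivity

lemma heatKer_cont (n : ℕ) (x : Eu n) (t : ℝ) : Continuous (fun ξ => heatKer n (x - ξ) t) := by
  unfold heatKer; fun_prop

lemma layer_s2 (n : ℕ) (ν : Measure (Eu n)) [SFinite ν] (f : Eu n → ℂ) (hf : Measurable f)
    (hf1 : ∀ ξ, ‖f ξ‖ = 1) (x : Eu n) {t : ℝ} (ht : 0 < t)
    (hint : Integrable (fun ξ => heatKer n (x - ξ) t) ν) :
    IntegrableOn (fun s : ℝ => ((kk n s * ((√t) ^ n)⁻¹ : ℝ) : ℂ) * ∫ ξ in ball x (√t * s), f ξ ∂ν)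
      (Set.Ioi 0) ∧
    heatInt n ν f x t =
      ∫ s in Set.Ioi (0:ℝ), ((kk n s * ((√t) ^ n)⁻¹ : ℝ) : ℂ) * ∫ ξ in ball x (√t * s), f ξ ∂ν := by
  have hst : 0 < √t := Real.sqrt_pos.2 ht
  set c : ℝ := ((√t) ^ n)⁻¹ with hc
  have hc0 : 0 < c := by positivity
  let S : Set (ℝ × Eu n) := {p | ‖x - p.2‖ / √t < p.1}
  have hS : MeasurableSet S := by
    apply measurableSet_lt <;> fun_prop
  let h : ℝ → Eu n → ℂ := fun s ξ => S.indicator (fun p => ((kk n p.1 * c : ℝ) : ℂ) * f p.2) (s, ξ)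
  have hmeas : Measurable (Function.uncurry h) := by
    have := (kk_cont n).measurable
    have : Measurable (fun p : ℝ × Eu n => ((kk n p.1 * c : ℝ) : ℂ) * f p.2) := by fun_prop
    exact this.indicator hS
  have hsub : ∀ ξ, Set.Ioi (‖x - ξ‖ / √t) ⊆ Set.Ioi 0 := fun ξ =>
    Set.Ioi_subset_Ioi (by positivity)
  have hfun : ∀ ξ, (fun s => h s ξ) =
      (Set.Ioi (‖x - ξ‖ / √t)).indicator (fun s => ((kk n s * c : ℝ) : ℂ) * f ξ) := by
    intro ξ; ext s; simp [h, S, Set.indicator]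
  have hfunn : ∀ ξ, (fun s => ‖h s ξ‖) =
      (Set.Ioi (‖x - ξ‖ / √t)).indicator (fun s => ‖((kk n s * c : ℝ) : ℂ) * f ξ‖) := by
    intro ξ
    ext s
    rw [show h s ξ = _ from congrFun (hfun ξ) s, norm_indicator_eq_indicator_norm]
  have hI : Integrable (Function.uncurry h) ((volume.restrict (Set.Ioi (0:ℝ))).prod ν) := by
    rw [integrable_prod_iff' hmeas.aestronglyMeasurable]
    constructor
    · refine .of_forall fun ξ => ?_
      change Integrable (fun s => h s ξ) _
      rw [hfun, integrable_indicator_iff measurableSet_Ioi]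
      have : IntegrableOn (fun s => ((kk n s * c : ℝ) : ℂ) * f ξ) (Set.Ioi (‖x - ξ‖ / √t)) :=
        (((heatKer_eq n (x - ξ) ht).1.mul_const c).ofReal).mul_const (f ξ)
      exact this.mono_measure Measure.restrict_le_self
    · convert hint using 1
      ext ξ
      change ∫ s in Set.Ioi 0, ‖h s ξ‖ = _
      rw [hfunn, setIntegral_indicator measurableSet_Ioi,
        Set.inter_eq_self_of_subset_right (hsub ξ), (heatKer_eq n (x - ξ) ht).2, ← hc,
        ← integral_const_mul]
      refine setIntegral_congr_fun measurableSet_Ioi fun s hs => ?_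
      have : 0 ≤ kk n s := kk_nonneg n (hsub ξ hs).le
      simp [hf1, abs_of_nonneg this, abs_of_pos hc0, mul_comm]
  have hin : ∀ s, ∫ ξ, h s ξ ∂ν = ((kk n s * c : ℝ) : ℂ) * ∫ ξ in ball x (√t * s), f ξ ∂ν := by
    intro s
    rw [← integral_const_mul, ← integral_indicator measurableSet_ball]
    congr 1
    ext ξ
    have : ‖x - ξ‖ / √t < s ↔ ξ ∈ ball x (√t * s) := by
      rw [mem_ball, dist_comm, dist_eq_norm, div_lt_iff₀ hst, mul_comm]
    by_cases hh : ‖x - ξ‖ / √t < s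
    · have hm : (s, ξ) ∈ S := hh
      simp only [h, Set.indicator_of_mem (this.1 hh), Set.indicator_of_mem hm]
    · have hm : (s, ξ) ∉ S := hh
      simp only [h, Set.indicator_of_notMem (fun h' => hh (this.2 h')),
        Set.indicator_of_notMem hm]
  constructor
  · have := hI.integral_prod_left
    simp only [Function.uncurry_apply_pair, hin] at this
    exact this
  · simp_rw [← hin]
    rw [integral_integral_swap hI]
    unfold heatInt
    congr 1
    ext ξ
    rw [hfun, setIntegral_indicator measurableSet_Ioi,
        Set.inter_eq_self_of_subset_right (hsub ξ), (heatKer_eq n (x - ξ) ht).2, ← hc,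
        integral_mul_const, integral_complex_ofReal, integral_mul_const, mul_comm c]

lemma vol_int (n : ℕ) (x : Eu n) {t : ℝ} (ht : 0 < t) :
    Integrable (fun ξ => heatKer n (x - ξ) t) volume ∧
    ∫ ξ, heatKer n (x - ξ) t = 1 := by
  have hv : ∫ ξ, heatKer n (x - ξ) t = 1 := by
    rw [integral_sub_left_eq_self (fun ξ => heatKer n ξ t) volume x]
    unfold heatKer
    rw [integral_const_mul]
    have := GaussianFourier.integral_rexp_neg_mul_sq_norm (V := Eu n) (b := 1 / (4 * t)) (by positivity)
    have e : ∀ v : Eu n, -‖v‖ ^ 2 / (4 * t) = -(1 / (4 * t)) * ‖v‖ ^ 2 := by intro v; ring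
    simp_rw [e]
    rw [this, finrank_euclideanSpace_fin]
    have e2 : π / (1 / (4 * t)) = 4 * π * t := by field_simp
    rw [e2, ← Real.rpow_add (by positivity)]
    convert Real.rpow_zero _ using 2; ring
  exact ⟨by by_contra h; rw [integral_undef h] at hv; norm_num at hv, hv⟩

lemma sq_cmp {n : ℕ} {x x₁ ξ : Eu n} {D : ℝ} (hD : dist x x₁ ≤ D) :
    ‖x₁ - ξ‖ ^ 2 ≤ 2 * ‖x - ξ‖ ^ 2 + 2 * D ^ 2 := by
  have h : ‖x₁ - ξ‖ ≤ D + ‖x - ξ‖ := by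
    rw [← dist_eq_norm, ← dist_eq_norm]
    have := dist_triangle x₁ x ξ
    rw [dist_comm x₁ x] at this
    linarith
  have := norm_nonneg (x₁ - ξ)
  nlinarith [sq_nonneg (D - ‖x - ξ‖)]

lemma heat_int (n : ℕ) (ν : Measure (Eu n)) {x x₁ : Eu n} {D t t₀ : ℝ} (hD : dist x x₁ ≤ D)
    (ht : 0 < t) (ht₀ : 0 < t₀) (htt : t ≤ t₀ / 2)
    (hint : Integrable (fun ξ => heatKer n (x₁ - ξ) t₀) ν) :
    Integrable (fun ξ => heatKer n (x - ξ) t) ν := by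
  have h1 : Integrable (fun ξ => Real.exp (-‖x₁ - ξ‖ ^ 2 / (4 * t₀))) ν := by
    have hne : (4 * π * t₀) ^ (-(n : ℝ) / 2) ≠ 0 := by positivity
    exact (integrable_const_mul_iff (IsUnit.mk0 _ hne) _).1 hint
  refine (h1.const_mul ((4 * π * t) ^ (-(n : ℝ) / 2) * Real.exp (D ^ 2 / (2 * t₀)))).mono'
    (heatKer_cont n x t).aestronglyMeasurable (.of_forall fun ξ => ?_)
  rw [Real.norm_of_nonneg (heatKer_nonneg n _ ht)]
  unfold heatKer
  rw [mul_assoc (_ ^ _), ← Real.exp_add]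
  gcongr
  have := sq_cmp (ξ := ξ) hD
  have h2 : ‖x - ξ‖ ^ 2 / (2 * t₀) ≤ ‖x - ξ‖ ^ 2 / (4 * t) := by
    refine div_le_div_of_nonneg_left (by positivity) (by positivity) (by linarith)
  have h3 : ‖x₁ - ξ‖ ^ 2 / (4 * t₀) ≤ (2 * ‖x - ξ‖ ^ 2 + 2 * D ^ 2) / (4 * t₀) := by gcongr
  have h4 : (2 * ‖x - ξ‖ ^ 2 + 2 * D ^ 2) / (4 * t₀) =
    ‖x - ξ‖ ^ 2 / (2 * t₀) + D ^ 2 / (2 * t₀) := by field_simp; ring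
  rw [neg_div, neg_div]; linarith

lemma growth (n : ℕ) (ν : Measure (Eu n)) [IsLocallyFiniteMeasure ν]
    {x₁ : Eu n} {t₀ : ℝ} (D : ℝ) (ht₀ : 0 < t₀)
    (hint : Integrable (fun ξ => heatKer n (x₁ - ξ) t₀) ν) :
    ∃ K, 0 ≤ K ∧ ∀ x r, dist x x₁ ≤ D → 0 < r →
      (ν (ball x r)).toReal ≤ K * Real.exp (r ^ 2 / (2 * t₀)) := by
  have h1 : Integrable (fun ξ => Real.exp (-‖x₁ - ξ‖ ^ 2 / (4 * t₀))) ν := by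
    have hne : (4 * π * t₀) ^ (-(n : ℝ) / 2) ≠ 0 := by positivity
    exact (integrable_const_mul_iff (IsUnit.mk0 _ hne) _).1 hint
  set I := ∫ ξ, Real.exp (-‖x₁ - ξ‖ ^ 2 / (4 * t₀)) ∂ν with hI
  have hI0 : 0 ≤ I := integral_nonneg fun _ => by positivity
  refine ⟨I * Real.exp (D ^ 2 / (2 * t₀)), by positivity, fun x r hD hr => ?_⟩
  have hfin : ν (ball x r) ≠ ⊤ := measure_ball_lt_top.ne
  have key : (ν (ball x r)).toReal * Real.exp (-(r ^ 2 / (2 * t₀) + D ^ 2 / (2 * t₀))) ≤ I := by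
    calc _ = ∫ ξ in ball x r, Real.exp (-(r ^ 2 / (2 * t₀) + D ^ 2 / (2 * t₀))) ∂ν := by
          simp [Measure.real]
      _ ≤ ∫ ξ in ball x r, Real.exp (-‖x₁ - ξ‖ ^ 2 / (4 * t₀)) ∂ν := by
          refine setIntegral_mono_on (integrableOn_const hfin) h1.integrableOn
            measurableSet_ball fun ξ hξ => ?_
          gcongr
          rw [mem_ball, dist_comm, dist_eq_norm] at hξ
          have := sq_cmp (ξ := ξ) hD
          have h3 : ‖x₁ - ξ‖ ^ 2 / (4 * t₀) ≤ (2 * r ^ 2 + 2 * D ^ 2) / (4 * t₀) := by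
            have : ‖x - ξ‖ ^ 2 ≤ r ^ 2 := by gcongr
            gcongr; linarith
          have h4 : (2 * r ^ 2 + 2 * D ^ 2) / (4 * t₀) =
            r ^ 2 / (2 * t₀) + D ^ 2 / (2 * t₀) := by field_simp; ring
          rw [neg_div]; linarith
      _ ≤ I := setIntegral_le_integral h1 (.of_forall fun _ => by positivity)
  rw [Real.exp_neg, ← div_eq_mul_inv, div_le_iff₀ (Real.exp_pos _), Real.exp_add] at key
  linarith

lemma pow_exp_int (m : ℕ) :
    IntegrableOn (fun s : ℝ => s ^ m * Real.exp (-s ^ 2 / 8)) (Set.Ioi 0) := by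
  have := integrableOn_rpow_mul_exp_neg_mul_sq (b := 1 / 8) (by norm_num) (s := m)
    (by have : (0:ℝ) ≤ m := by positivity
        linarith)
  refine this.congr_fun (fun s _ => ?_) measurableSet_Ioi
  simp only [Real.rpow_natCast]
  congr 2; ring

lemma est_near {n : ℕ} {α d t s ε G : ℝ} (hd0 : 0 ≤ d) (hd : d < α * t) (hα : 0 < α)
    (ht : 0 < t) (ht1 : t ≤ 1) (hs : 0 < s) (hε : 0 ≤ ε) (hG : G ≤ ε * (d + √t * s) ^ n) :
    ((√t) ^ n)⁻¹ * G ≤ ε * (α + s) ^ n := by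
  have hst : 0 < √t := Real.sqrt_pos.2 ht
  have h1 : t ≤ √t := by
    have : √t ≤ 1 := Real.sqrt_le_one.2 ht1
    nlinarith [Real.mul_self_sqrt ht.le]
  have h2 : d + √t * s ≤ √t * (α + s) := by nlinarith
  rw [inv_mul_le_iff₀ (by positivity)]
  calc G ≤ ε * (d + √t * s) ^ n := hG
    _ ≤ ε * (√t * (α + s)) ^ n := by gcongr
    _ = _ := by rw [mul_pow]; ring

lemma est_far {n : ℕ} {t s δ : ℝ} (hδ : 0 < δ) (ht : 0 < t) (h : δ ≤ √t * s) :
    ((√t) ^ n)⁻¹ ≤ (s / δ) ^ n := by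
  have hst : 0 < √t := Real.sqrt_pos.2 ht
  rw [← inv_pow]
  gcongr
  rw [le_div_iff₀ hδ, inv_mul_le_iff₀ hst]
  exact h

lemma bound_int (n : ℕ) {α δ K : ℝ} (hα : 0 < α) :
    IntegrableOn (fun s => kk n s * ((α + s) ^ n + (s / δ) ^ n * (K * Real.exp (s ^ 2 / 8))))
      (Set.Ioi 0) := by
  have h1 : IntegrableOn (fun s => kk n s * (α + s) ^ n) (Set.Ioi 0) := by
    set A : ℝ := (4 * π) ^ (-(n : ℝ) / 2)
    have hA : 0 ≤ A := by positivity
    refine Integrable.mono' (g := fun s => (A * (2 ^ (n - 1) * α ^ n)) * (s ^ 1 * Real.exp (-s ^ 2 / 8))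
      + (A * 2 ^ (n - 1)) * (s ^ (n + 1) * Real.exp (-s ^ 2 / 8)))
      (((pow_exp_int 1).const_mul _).add ((pow_exp_int (n + 1)).const_mul _)) ?_ ?_
    · have := kk_cont n
      exact (by fun_prop : Continuous (fun s => kk n s * (α + s) ^ n)).aestronglyMeasurable
    · refine (ae_restrict_iff' measurableSet_Ioi).2 (.of_forall fun s (hs : 0 < s) => ?_)
      rw [Real.norm_of_nonneg (mul_nonneg (kk_nonneg n hs.le) (by positivity))]
      have e1 : kk n s ≤ A * (s * Real.exp (-s ^ 2 / 8)) := by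
        unfold kk
        have e3 : Real.exp (-s ^ 2 / 4) ≤ Real.exp (-s ^ 2 / 8) :=
          Real.exp_le_exp.2 (by nlinarith [sq_nonneg s])
        have e4 : s / 2 ≤ s := by linarith
        gcongr
      have e2 : (α + s) ^ n ≤ 2 ^ (n - 1) * (α ^ n + s ^ n) := add_pow_le hα.le hs.le n
      calc _ ≤ A * (s * Real.exp (-s ^ 2 / 8)) * (2 ^ (n - 1) * (α ^ n + s ^ n)) := by gcongr
        _ = _ := by ring
  have h2 : IntegrableOn (fun s => kk n s * ((s / δ) ^ n * (K * Real.exp (s ^ 2 / 8))))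
      (Set.Ioi 0) := by
    refine IntegrableOn.congr_fun
      ((pow_exp_int (n + 1)).const_mul ((4 * π) ^ (-(n : ℝ) / 2) / 2 * K / δ ^ n))
      (fun s _ => ?_) measurableSet_Ioi
    unfold kk
    have : Real.exp (-s ^ 2 / 8) = Real.exp (-s ^ 2 / 4) * Real.exp (s ^ 2 / 8) := by
      rw [← Real.exp_add]; congr 1; ring
    simp only [this, div_pow]
    ring
  refine (h1.add h2).congr_fun (fun s _ => ?_) measurableSet_Ioi
  simp only [Pi.add_apply]; ring

theorem stmt2 {n : ℕ} (hn : 0 < n)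
    (ν : Measure (Eu n)) [IsLocallyFiniteMeasure ν]
    (f : Eu n → ℂ) (hf : Measurable f) (hf1 : ∀ ξ, ‖f ξ‖ = 1)
    (t₀ : ℝ) (ht₀ : 0 < t₀) (x₁ : Eu n)
    (hfin : ∫⁻ ξ, ENNReal.ofReal (heatKer n (x₁ - ξ) t₀) ∂ν < ⊤)
    (x₀ : Eu n) (L : ℂ) (hσ : IsSigmaPt n ν f x₀ L) :
    NTlim n (fun x t => heatInt n ν f x t) x₀ L := by
  intro α hα
  have hint : Integrable (fun ξ => heatKer n (x₁ - ξ) t₀) ν := by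
    refine ⟨(heatKer_cont n x₁ t₀).aestronglyMeasurable, ?_⟩
    rw [hasFiniteIntegral_iff_ofReal (.of_forall fun ξ => heatKer_nonneg n _ ht₀)]
    exact hfin
  obtain ⟨K₁, hK₁, hg₁⟩ := growth n ν (dist x₀ x₁ + 1) ht₀ hint
  obtain ⟨K₂, hK₂, hg₂⟩ := growth n volume (dist x₀ x₁ + 1) ht₀ (vol_int n x₁ ht₀).1
  obtain ⟨δ, hδ, hσ1⟩ := hσ 1 one_pos
  set l := 𝓝[{p : Eu n × ℝ | 0 < p.2 ∧ dist p.1 x₀ < α * p.2}] (x₀, (0:ℝ)) with hl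
  have hcone : ∀ᶠ p in l, 0 < p.2 ∧ dist p.1 x₀ < α * p.2 := eventually_mem_nhdsWithin
  have hx : ∀ η > 0, ∀ᶠ p in l, dist p.1 x₀ < η := by
    intro η hη
    have : Tendsto (fun p : Eu n × ℝ => p.1) l (𝓝 x₀) :=
      (continuous_fst.tendsto (x₀, (0:ℝ))).mono_left nhdsWithin_le_nhds
    exact this.eventually (ball_mem_nhds x₀ hη)
  have ht : ∀ η > 0, ∀ᶠ p in l, p.2 < η := by
    intro η hη
    have : Tendsto (fun p : Eu n × ℝ => p.2) l (𝓝 0) :=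
      (continuous_snd.tendsto (x₀, (0:ℝ))).mono_left nhdsWithin_le_nhds
    exact this.eventually (gt_mem_nhds hη)
  let G : Eu n × ℝ → ℝ → ℂ := fun p s => (∫ ξ in ball p.1 (√p.2 * s), f ξ ∂ν) -
    L * ((volume (ball p.1 (√p.2 * s))).toReal : ℂ)
  let F : Eu n × ℝ → ℝ → ℂ := fun p s => ((kk n s * ((√p.2) ^ n)⁻¹ : ℝ) : ℂ) * G p s
  have hFn : ∀ p : Eu n × ℝ, 0 < p.2 → ∀ s, 0 < s →
      ‖F p s‖ = kk n s * (((√p.2) ^ n)⁻¹ * ‖G p s‖) := by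
    intro p hp s hs
    have h1 : 0 ≤ kk n s * ((√p.2) ^ n)⁻¹ := mul_nonneg (kk_nonneg n hs.le) (by positivity)
    simp only [F]
    rw [norm_mul, Complex.norm_real, Real.norm_of_nonneg h1, mul_assoc]
  -- representation
  have hrep : ∀ᶠ p in l, IntegrableOn (F p) (Set.Ioi 0) ∧
      heatInt n ν f p.1 p.2 - L = ∫ s in Set.Ioi (0:ℝ), F p s := by
    filter_upwards [hcone, hx 1 one_pos, ht (t₀ / 2) (by positivity)] with p hp hp1 hp2
    have hD : dist p.1 x₁ ≤ dist x₀ x₁ + 1 := by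
      have := dist_triangle p.1 x₀ x₁
      linarith
    obtain ⟨a1, a2⟩ := layer_s2 n ν f hf hf1 p.1 hp.1 (heat_int n ν hD hp.1 ht₀ hp2.le hint)
    obtain ⟨b1, b2⟩ := layer_s2 n volume (fun _ => 1) measurable_const (by simp) p.1 hp.1
      (vol_int n p.1 hp.1).1
    have b3 : heatInt n volume (fun _ => 1) p.1 p.2 = 1 := by
      unfold heatInt
      simp only [mul_one]
      rw [integral_complex_ofReal, (vol_int n p.1 hp.1).2]; simp
    have hFeq : F p = fun s => ((kk n s * ((√p.2) ^ n)⁻¹ : ℝ) : ℂ) *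
        (∫ ξ in ball p.1 (√p.2 * s), f ξ ∂ν) - L * (((kk n s * ((√p.2) ^ n)⁻¹ : ℝ) : ℂ) *
        ∫ ξ in ball p.1 (√p.2 * s), (1:ℂ)) := by
      ext s
      simp only [F, G, setIntegral_const, Measure.real, Complex.real_smul, mul_one]
      ring
    rw [hFeq]
    refine ⟨a1.sub (b1.const_mul L), ?_⟩
    rw [integral_sub a1 (b1.const_mul L), integral_const_mul, ← a2, ← b2, b3, mul_one]
  have hlim : Tendsto (fun p => ∫ s in Set.Ioi (0:ℝ), F p s) l (𝓝 (∫ s in Set.Ioi (0:ℝ), 0)) := by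
    refine tendsto_integral_filter_of_dominated_convergence
      (fun s => kk n s * ((α + s) ^ n + (s / δ) ^ n * ((K₁ + ‖L‖ * K₂) * Real.exp (s ^ 2 / 8))))
      (hrep.mono fun p hp => hp.1.aestronglyMeasurable) ?_ (bound_int n hα) ?_
    · filter_upwards [hcone, hx 1 one_pos, hx δ hδ, ht 1 one_pos, ht (t₀ / 4) (by positivity)]
        with p hp hp1 hpδ hpt hpt0
      refine (ae_restrict_iff' measurableSet_Ioi).2 (.of_forall fun s (hs : 0 < s) => ?_)
      have hr : 0 < √p.2 * s := mul_pos (Real.sqrt_pos.2 hp.1) hs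
      rw [hFn p hp.1 s hs]
      refine mul_le_mul_of_nonneg_left ?_ (kk_nonneg n hs.le)
      rcases lt_or_ge (√p.2 * s) δ with hlt | hge
      · have := est_near dist_nonneg hp.2 hα hp.1 hpt.le hs zero_le_one
          (hσ1 p.1 _ hr hpδ hlt).le
        rw [one_mul] at this
        refine this.trans (le_add_of_nonneg_right ?_)
        positivity
      · have hD : dist p.1 x₁ ≤ dist x₀ x₁ + 1 := by
          have := dist_triangle p.1 x₀ x₁
          linarith
        have hE : Real.exp ((√p.2 * s) ^ 2 / (2 * t₀)) ≤ Real.exp (s ^ 2 / 8) := by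
          refine Real.exp_le_exp.2 ?_
          rw [mul_pow, Real.sq_sqrt hp.1.le, div_le_div_iff₀ (by positivity) (by norm_num)]
          nlinarith [sq_nonneg s]
        have hG : ‖G p s‖ ≤ (K₁ + ‖L‖ * K₂) * Real.exp (s ^ 2 / 8) := by
          have i1 : ‖∫ ξ in ball p.1 (√p.2 * s), f ξ ∂ν‖ ≤ K₁ * Real.exp (s ^ 2 / 8) := by
            have := norm_setIntegral_le_of_norm_le_const (μ := ν) (s := ball p.1 (√p.2 * s))
              (f := f) (C := 1) measure_ball_lt_top (fun ξ _ => (hf1 ξ).le)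
            rw [one_mul] at this
            exact (this.trans (hg₁ p.1 _ hD hr)).trans (by gcongr)
          have i2 : (volume (ball p.1 (√p.2 * s))).toReal ≤ K₂ * Real.exp (s ^ 2 / 8) :=
            (hg₂ p.1 _ hD hr).trans (by gcongr)
          refine (norm_sub_le _ _).trans ?_
          rw [norm_mul, Complex.norm_real, Real.norm_of_nonneg ENNReal.toReal_nonneg]
          have := mul_le_mul_of_nonneg_left i2 (norm_nonneg L)
          linarith
        have := mul_le_mul (est_far (n := n) hδ hp.1 hge) hG (norm_nonneg _) (by positivity)
        refine this.trans (le_add_of_nonneg_left ?_)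
        positivity
    · refine (ae_restrict_iff' measurableSet_Ioi).2 (.of_forall fun s (hs : 0 < s) => ?_)
      rw [Metric.tendsto_nhds]
      intro η hη
      have hB : 0 ≤ kk n s * (α + s) ^ n := mul_nonneg (kk_nonneg n hs.le) (by positivity)
      set ε := η / (kk n s * (α + s) ^ n + 1) with hεd
      have hε : 0 < ε := by positivity
      obtain ⟨δ', hδ', hσ'⟩ := hσ ε hε
      filter_upwards [hcone, hx δ' hδ', ht 1 one_pos, ht ((δ' / s) ^ 2) (by positivity)]
        with p hp hpδ hpt hps
      have hr : 0 < √p.2 * s := mul_pos (Real.sqrt_pos.2 hp.1) hs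
      have hlt : √p.2 * s < δ' := by
        rw [← lt_div_iff₀ hs]
        exact (Real.sqrt_lt' (by positivity)).2 hps
      rw [dist_zero_right, hFn p hp.1 s hs]
      have := est_near dist_nonneg hp.2 hα hp.1 hpt.le hs hε.le (hσ' p.1 _ hr hpδ hlt).le
      calc _ ≤ kk n s * (ε * (α + s) ^ n) := mul_le_mul_of_nonneg_left this (kk_nonneg n hs.le)
        _ = ε * (kk n s * (α + s) ^ n) := by ring
        _ < ε * (kk n s * (α + s) ^ n + 1) := by gcongr; linarith
        _ = η := by rw [hεd]; field_simp
  rw [integral_zero] at hlim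
  have h2 : Tendsto (fun p : Eu n × ℝ => heatInt n ν f p.1 p.2 - L) l (𝓝 0) :=
    hlim.congr' (hrep.mono fun p hp => hp.2.symm)
  simpa using h2.add_const L

end
end
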